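/- For any realization of Algorithm RFD on an input of length n, the segments of the rescale partition R of [1,n] satisfy: (1) the first segment has length m with 1 ≤ m ≤ L + 1; (2) any segment other than the first and the last has length m with ⌊(1−c)L⌋ ≤ m ≤ L; (3) if R has more than one segment, the last segment has length m with 1 ≤ m ≤ L. -/

import Mathlib

open Finset

/-- One call to `Update`: if the total would exceed `T`, rescale first
(replace each count `s i` by `max 1 ⌊cf * s i⌋`), then add `d` to the count of `x`. -/
noncomputable def RFDupdate {N : ℕ} (cf : ℝ) (d T : ℕ) (s : Fin N → ℕ) (x : Fin N) : Fin N → ℕ :=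
  let s' : Fin N → ℕ :=
    if T < (∑ i, s i) + d then (fun i => max 1 ⌊cf * (s i : ℝ)⌋₊) else s
  fun i => if i = x then s' i + d else s' i

/-- State (counts) of Algorithm RFD after `k` update steps on the input sequence `xs`
(0-indexed: the `k`-th step processes symbol `xs (k-1)`). -/
noncomputable def RFDcounts {N : ℕ} (cf : ℝ) (d T : ℕ) (s0 : Fin N → ℕ) (xs : ℕ → Fin N) : ℕ → Fin N → ℕ
  | 0 => s0
  | k + 1 => RFDupdate cf d T (RFDcounts cf d T s0 xs k) (xs k)

/-- Total counter `t` after `k` update steps. -/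
noncomputable def RFDtotal {N : ℕ} (cf : ℝ) (d T : ℕ) (s0 : Fin N → ℕ) (xs : ℕ → Fin N) (k : ℕ) : ℕ :=
  ∑ i, RFDcounts cf d T s0 xs k i

/-- A rescale takes place in step `k ≥ 1` iff at the beginning of step `k`
the total plus `d` exceeds `T`. -/
def RFDrescaleAt {N : ℕ} (cf : ℝ) (d T : ℕ) (s0 : Fin N → ℕ) (xs : ℕ → Fin N) (k : ℕ) : Prop :=
  1 ≤ k ∧ T < RFDtotal cf d T s0 xs (k - 1) + d

/-- `P` is a partition of the integer interval `[a,b]` into consecutive closed intervals,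
listed in order; an interval `[i,j]` is represented by the pair `(i,j)`. -/
def ConsecPartition (a b : ℕ) (P : List (ℕ × ℕ)) : Prop :=
  P ≠ [] ∧ P.head?.map Prod.fst = some a ∧ P.getLast?.map Prod.snd = some b ∧
    (∀ p ∈ P, p.1 ≤ p.2) ∧ P.Chain' (fun p q => q.1 = p.2 + 1)

/-- `P` is the rescale partition of `[a,b]`: a partition into consecutive intervals `[i,j]`
such that no rescale occurs at steps `i,…,j-1`, and a rescale occurs at step `j` whenever
`j < b` (for the last interval, a rescale at its last step is optional). -/
def RFDrescalePartition {N : ℕ} (cf : ℝ) (d T : ℕ) (s0 : Fin N → ℕ) (xs : ℕ → Fin N)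
    (a b : ℕ) (P : List (ℕ × ℕ)) : Prop :=
  ConsecPartition a b P ∧
    (∀ p ∈ P, ∀ k, p.1 ≤ k → k < p.2 → ¬ RFDrescaleAt cf d T s0 xs k) ∧
    (∀ p ∈ P, p.2 < b → RFDrescaleAt cf d T s0 xs p.2)

/-- The probability `RFD(x; x^k)` that Algorithm RFD assigns to symbol `x` after `k` steps. -/
noncomputable def RFDprob {N : ℕ} (cf : ℝ) (d T : ℕ) (s0 : Fin N → ℕ) (xs : ℕ → Fin N)
    (k : ℕ) (x : Fin N) : ℝ :=
  (RFDcounts cf d T s0 xs k x : ℝ) / (RFDtotal cf d T s0 xs k : ℝ)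

/-- Ideal code length (in bits) of Algorithm RFD on steps `a,…,b` (1-indexed steps;
step `k` encodes symbol `xs (k-1)` using the prediction after `k-1` steps). -/
noncomputable def RFDcodeLen {N : ℕ} (cf : ℝ) (d T : ℕ) (s0 : Fin N → ℕ) (xs : ℕ → Fin N)
    (a b : ℕ) : ℝ :=
  -∑ k ∈ Finset.Icc a b, Real.logb 2 (RFDprob cf d T s0 xs (k - 1) (xs (k - 1)))

/-- Ideal code length (in bits) of a fixed distribution `p` on steps `a,…,b`. -/
noncomputable def distCodeLen {N : ℕ} (p : Fin N → ℝ) (xs : ℕ → Fin N) (a b : ℕ) : ℝ :=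
  -∑ k ∈ Finset.Icc a b, Real.logb 2 (p (xs (k - 1)))

/-!
Rescaling replaces a count `m ≥ 1` by `max 1 ⌊c * m⌋`, which lies between `1` and
`c * m + (1 - c)`. Summing over the alphabet, a step with a rescale turns the total `t` into some
`t'` with `N + d ≤ t' ≤ c * t + (1 - c) * N + d`, while any other step adds exactly `d`; the
condition `d ≤ (1 - c) * (T - N)` is what keeps every total at most `T`. In a segment of length
`m + 1` the total grows by `m * d` before the last step. As it stays at most `T` and starts from
at least `N`, respectively from at least `N + d` right after a rescale, this bounds `m` from above.
A rescale at the last step means that the total is then above `T - d`, although it started from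
at most `c * T + (1 - c) * N + d` if the segment was preceded by a rescale; this bounds `m` from
below.
-/

theorem max_one_floor_mul_le {R : Type*} [Ring R] [LinearOrder R] [IsStrictOrderedRing R]
    [FloorSemiring R] {c x : R} (hc0 : 0 ≤ c) (hc1 : c ≤ 1) (hx : 1 ≤ x) :
    ((max 1 ⌊c * x⌋₊ : ℕ) : R) ≤ c * x + (1 - c) := by
  have hfloor : (⌊c * x⌋₊ : R) ≤ c * x := Nat.floor_le (mul_nonneg hc0 (zero_le_one.trans hx))
  have hc : c ≤ c * x := le_mul_of_one_le_right hc0 hx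
  rw [Nat.cast_max, Nat.cast_one]
  refine max_le ?_ (le_add_of_le_of_nonneg hfloor (sub_nonneg.mpr hc1))
  calc (1 : R) = c + (1 - c) := (add_sub_cancel c 1).symm
    _ ≤ c * x + (1 - c) := by gcongr

theorem cast_le_sub_div_of_add_mul_le {K : Type*} [Field K] [LinearOrder K] [IsStrictOrderedRing K]
    {b d m t : ℕ} (hd : 0 < d) (h : b + m * d ≤ t) : (m : K) ≤ ((t : K) - b) / d := by
  rw [le_div_iff₀ (Nat.cast_pos.mpr hd), le_sub_iff_add_le']
  exact_mod_cast h

theorem card_le_sum_of_one_le {ι : Type*} [Fintype ι] {s : ι → ℕ} (hs : ∀ i, 1 ≤ s i) :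
    Fintype.card ι ≤ ∑ i, s i := by
  simpa using card_nsmul_le_sum univ s 1 fun i _ => hs i

/-- The counts after a rescale of the counts `s`, before the current symbol is counted. -/
noncomputable def RFDrescale {ι : Type*} (cf : ℝ) (s : ι → ℕ) : ι → ℕ :=
  fun i => max 1 ⌊cf * (s i : ℝ)⌋₊

theorem one_le_RFDrescale {ι : Type*} (cf : ℝ) (s : ι → ℕ) (i : ι) : 1 ≤ RFDrescale cf s i :=
  le_max_left _ _

theorem sum_RFDrescale_le {ι : Type*} [Fintype ι] {cf : ℝ} (hc0 : 0 ≤ cf) (hc1 : cf ≤ 1)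
    {s : ι → ℕ} (hs : ∀ i, 1 ≤ s i) :
    ((∑ i, RFDrescale cf s i : ℕ) : ℝ) ≤
      cf * (∑ i, s i : ℕ) + (1 - cf) * Fintype.card ι := by
  push_cast
  calc ∑ i, (RFDrescale cf s i : ℝ) ≤ ∑ i, (cf * (s i : ℝ) + (1 - cf)) :=
        sum_le_sum fun i _ => max_one_floor_mul_le hc0 hc1 (Nat.one_le_cast.mpr (hs i))
    _ = cf * ∑ i, (s i : ℝ) + (1 - cf) * Fintype.card ι := by
        rw [sum_add_distrib, ← mul_sum, sum_const, card_univ, nsmul_eq_mul, mul_comm (1 - cf)]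

section Update

variable {N : ℕ} {cf : ℝ} {d T : ℕ} {s : Fin N → ℕ}

theorem RFDupdate_apply (x i : Fin N) :
    RFDupdate cf d T s x i =
      (if T < ∑ i, s i + d then RFDrescale cf s else s) i + if i = x then d else 0 := by
  unfold RFDupdate RFDrescale
  split_ifs <;> rfl

theorem one_le_RFDupdate (hs : ∀ i, 1 ≤ s i) (x i : Fin N) : 1 ≤ RFDupdate cf d T s x i := by
  rw [RFDupdate_apply]
  refine le_add_right ?_
  split_ifs
  exacts [one_le_RFDrescale cf s i, hs i]

theorem sum_RFDupdate (x : Fin N) :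
    ∑ i, RFDupdate cf d T s x i =
      ∑ i, (if T < ∑ i, s i + d then RFDrescale cf s else s) i + d := by
  simp only [RFDupdate_apply, sum_add_distrib, sum_ite_eq', mem_univ, if_true]

end Update

section Run

variable {N : ℕ} {cf : ℝ} {d T : ℕ} {s0 : Fin N → ℕ} {xs : ℕ → Fin N}

theorem one_le_RFDcounts (hs0 : ∀ x, 1 ≤ s0 x) (k : ℕ) (i : Fin N) :
    1 ≤ RFDcounts cf d T s0 xs k i := by
  induction k generalizing i with
  | zero => exact hs0 i
  | succ k ih => exact one_le_RFDupdate ih (xs k) i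

theorem le_RFDtotal (hs0 : ∀ x, 1 ≤ s0 x) (k : ℕ) : N ≤ RFDtotal cf d T s0 xs k := by
  simpa only [Fintype.card_fin, RFDtotal] using card_le_sum_of_one_le (one_le_RFDcounts hs0 k)

theorem RFDrescaleAt_succ_iff {k : ℕ} :
    RFDrescaleAt cf d T s0 xs (k + 1) ↔ T < RFDtotal cf d T s0 xs k + d := by
  simp [RFDrescaleAt]

theorem RFDtotal_succ_of_not_rescaleAt {k : ℕ} (h : ¬ RFDrescaleAt cf d T s0 xs (k + 1)) :
    RFDtotal cf d T s0 xs (k + 1) = RFDtotal cf d T s0 xs k + d := by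
  rw [RFDrescaleAt_succ_iff] at h
  exact (sum_RFDupdate (xs k)).trans (by rw [← RFDtotal, if_neg h, RFDtotal])

theorem RFDtotal_succ_of_rescaleAt {k : ℕ} (h : RFDrescaleAt cf d T s0 xs (k + 1)) :
    RFDtotal cf d T s0 xs (k + 1) = ∑ i, RFDrescale cf (RFDcounts cf d T s0 xs k) i + d := by
  rw [RFDrescaleAt_succ_iff] at h
  exact (sum_RFDupdate (xs k)).trans (by rw [← RFDtotal, if_pos h])

theorem add_le_RFDtotal_succ_of_rescaleAt {k : ℕ} (h : RFDrescaleAt cf d T s0 xs (k + 1)) :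
    N + d ≤ RFDtotal cf d T s0 xs (k + 1) := by
  rw [RFDtotal_succ_of_rescaleAt h]
  gcongr
  simpa only [Fintype.card_fin] using card_le_sum_of_one_le (one_le_RFDrescale (ι := Fin N) cf _)

theorem RFDtotal_succ_le_of_rescaleAt (hc0 : 0 ≤ cf) (hc1 : cf ≤ 1) (hs0 : ∀ x, 1 ≤ s0 x)
    {k : ℕ} (h : RFDrescaleAt cf d T s0 xs (k + 1)) :
    (RFDtotal cf d T s0 xs (k + 1) : ℝ) ≤
      cf * RFDtotal cf d T s0 xs k + (1 - cf) * N + d := by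
  rw [RFDtotal_succ_of_rescaleAt h, Nat.cast_add]
  gcongr
  simpa only [Fintype.card_fin, RFDtotal] using sum_RFDrescale_le hc0 hc1 (one_le_RFDcounts hs0 k)

theorem RFDtotal_le (hc0 : 0 ≤ cf) (hc1 : cf ≤ 1) (hT : (d : ℝ) ≤ (1 - cf) * ((T : ℝ) - N))
    (hs0 : ∀ x, 1 ≤ s0 x) (hsum : ∑ x, s0 x ≤ T) (k : ℕ) : RFDtotal cf d T s0 xs k ≤ T := by
  induction k with
  | zero => exact hsum
  | succ k ih =>
    by_cases h : RFDrescaleAt cf d T s0 xs (k + 1)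
    · rw [← Nat.cast_le (α := ℝ)]
      calc (RFDtotal cf d T s0 xs (k + 1) : ℝ)
          ≤ cf * RFDtotal cf d T s0 xs k + (1 - cf) * N + d :=
            RFDtotal_succ_le_of_rescaleAt hc0 hc1 hs0 h
        _ ≤ cf * T + (1 - cf) * N + (1 - cf) * (T - N) := by gcongr
        _ = T := by ring
    · rw [RFDtotal_succ_of_not_rescaleAt h]
      exact not_lt.mp (RFDrescaleAt_succ_iff.not.mp h)

/-- No rescale takes place in the `m` steps `a + 1, …, a + m` that follow the state after `a`
steps. A segment of length `m + 1` starting at step `a + 1` is such a run together with one final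
step, in which a rescale is allowed. -/
def RFDrescaleFree (cf : ℝ) (d T : ℕ) (s0 : Fin N → ℕ) (xs : ℕ → Fin N) (a m : ℕ) : Prop :=
  ∀ k < m, ¬ RFDrescaleAt cf d T s0 xs (a + k + 1)

namespace RFDrescaleFree

variable {a m : ℕ}

theorem RFDtotal_add (h : RFDrescaleFree cf d T s0 xs a m) :
    RFDtotal cf d T s0 xs (a + m) = RFDtotal cf d T s0 xs a + m * d := by
  induction m with
  | zero => simp
  | succ m ih =>
    calc RFDtotal cf d T s0 xs (a + m + 1) = RFDtotal cf d T s0 xs (a + m) + d :=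
          RFDtotal_succ_of_not_rescaleAt (h m m.lt_succ_self)
      _ = RFDtotal cf d T s0 xs a + (m + 1) * d := by
          rw [ih fun k hk => h k (hk.trans m.lt_succ_self)]
          ring

theorem add_mul_le (h : RFDrescaleFree cf d T s0 xs a m) (hs0 : ∀ x, 1 ≤ s0 x)
    (hle : RFDtotal cf d T s0 xs (a + m) ≤ T) : N + m * d ≤ T :=
  calc N + m * d ≤ RFDtotal cf d T s0 xs a + m * d := by gcongr; exact le_RFDtotal hs0 a
    _ = RFDtotal cf d T s0 xs (a + m) := h.RFDtotal_add.symm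
    _ ≤ T := hle

theorem add_succ_mul_le (h : RFDrescaleFree cf d T s0 xs (a + 1) m)
    (ha : RFDrescaleAt cf d T s0 xs (a + 1)) (hle : RFDtotal cf d T s0 xs (a + 1 + m) ≤ T) :
    N + (m + 1) * d ≤ T :=
  calc N + (m + 1) * d = N + d + m * d := by ring
    _ ≤ RFDtotal cf d T s0 xs (a + 1) + m * d := by
        gcongr
        exact add_le_RFDtotal_succ_of_rescaleAt ha
    _ = RFDtotal cf d T s0 xs (a + 1 + m) := h.RFDtotal_add.symm
    _ ≤ T := hle

theorem mul_sub_lt (h : RFDrescaleFree cf d T s0 xs (a + 1) m) (hc0 : 0 ≤ cf) (hc1 : cf ≤ 1)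
    (hs0 : ∀ x, 1 ≤ s0 x) (ha : RFDrescaleAt cf d T s0 xs (a + 1))
    (hend : RFDrescaleAt cf d T s0 xs (a + 1 + m + 1)) (hle : RFDtotal cf d T s0 xs a ≤ T) :
    (1 - cf) * ((T : ℝ) - N) < (m + 2) * d := by
  have hstart : (RFDtotal cf d T s0 xs (a + 1) : ℝ) ≤ cf * T + (1 - cf) * N + d :=
    (RFDtotal_succ_le_of_rescaleAt hc0 hc1 hs0 ha).trans (by gcongr)
  have hlast : (T : ℝ) < RFDtotal cf d T s0 xs (a + 1) + m * d + d := by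
    rw [RFDrescaleAt_succ_iff, h.RFDtotal_add] at hend
    exact_mod_cast hend
  linarith

end RFDrescaleFree

end Run

namespace ConsecPartition

variable {a b : ℕ} {P : List (ℕ × ℕ)}

theorem getElem_zero_fst (hP : ConsecPartition a b P) (h0 : 0 < P.length) : P[0].1 = a := by
  simpa [List.head?_eq_getElem?, h0] using hP.2.1

theorem fst_le_snd (hP : ConsecPartition a b P) {i : ℕ} (hi : i < P.length) : P[i].1 ≤ P[i].2 :=
  hP.2.2.2.1 _ (List.getElem_mem hi)

theorem getElem_succ_fst (hP : ConsecPartition a b P) {i : ℕ} (hi : i + 1 < P.length) :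
    P[i + 1].1 = P[i].2 + 1 :=
  List.IsChain.getElem hP.2.2.2.2 i hi

theorem pairwise_snd_lt (hP : ConsecPartition a b P) : P.Pairwise fun p q => p.2 < q.2 := by
  have hchain : (P.map Prod.snd).IsChain (· < ·) := by
    refine (List.isChain_map _).mpr (List.isChain_iff_getElem.mpr fun i hi => ?_)
    calc P[i].2 < P[i].2 + 1 := Nat.lt_succ_self _
      _ = P[i + 1].1 := (hP.getElem_succ_fst hi).symm
      _ ≤ P[i + 1].2 := hP.fst_le_snd hi
  exact List.pairwise_map.mp hchain.pairwise

theorem snd_lt (hP : ConsecPartition a b P) {i : ℕ} (hi : i + 1 < P.length) : P[i].2 < b := by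
  have hlast : P[P.length - 1].2 = b := by
    simpa [List.getLast?_eq_getElem?, show P.length - 1 < P.length by lia] using hP.2.2.1
  rw [← hlast]
  exact List.pairwise_iff_getElem.mp hP.pairwise_snd_lt i _ _ _ (by lia)

end ConsecPartition

namespace RFDrescalePartition

variable {N : ℕ} {cf : ℝ} {d T : ℕ} {s0 : Fin N → ℕ} {xs : ℕ → Fin N} {a b : ℕ}
  {P : List (ℕ × ℕ)} {i : ℕ}

theorem rescaleFree (hP : RFDrescalePartition cf d T s0 xs a b P) (hi : i < P.length) {k : ℕ}
    (hk : P[i].1 = k + 1) : RFDrescaleFree cf d T s0 xs k (P[i].2 - P[i].1) :=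
  fun l hl => hP.2.1 _ (List.getElem_mem hi) _ (by lia) (by lia)

theorem exists_rescaleAt_before (hP : RFDrescalePartition cf d T s0 xs a b P) (hi0 : 0 < i)
    (hi : i < P.length) : ∃ k, P[i].1 = k + 1 + 1 ∧ RFDrescaleAt cf d T s0 xs (k + 1) := by
  obtain ⟨i, rfl⟩ := Nat.exists_eq_add_of_le' hi0
  have hresc := hP.2.2 _ (List.getElem_mem _) (hP.1.snd_lt hi)
  obtain ⟨k, hk⟩ := Nat.exists_eq_add_of_le' hresc.1
  exact ⟨k, hk ▸ hP.1.getElem_succ_fst hi, hk ▸ hresc⟩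

theorem length_zero_le (hP : RFDrescalePartition cf d T s0 xs a b P) (ha : 1 ≤ a) (hd : 0 < d)
    (hs0 : ∀ x, 1 ≤ s0 x) (hle : ∀ k, RFDtotal cf d T s0 xs k ≤ T) (h0 : 0 < P.length) :
    ((P[0].2 - P[0].1 + 1 : ℕ) : ℝ) ≤ ((T : ℝ) - N) / d + 1 := by
  obtain ⟨a, rfl⟩ := Nat.exists_eq_add_of_le' ha
  have hfree := hP.rescaleFree h0 (hP.1.getElem_zero_fst h0)
  rw [Nat.cast_succ]
  gcongr
  exact cast_le_sub_div_of_add_mul_le hd (hfree.add_mul_le hs0 (hle _))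

theorem length_le (hP : RFDrescalePartition cf d T s0 xs a b P) (hd : 0 < d)
    (hle : ∀ k, RFDtotal cf d T s0 xs k ≤ T) (hi0 : 0 < i) (hi : i < P.length) :
    ((P[i].2 - P[i].1 + 1 : ℕ) : ℝ) ≤ ((T : ℝ) - N) / d := by
  obtain ⟨k, hk, hresc⟩ := hP.exists_rescaleAt_before hi0 hi
  exact cast_le_sub_div_of_add_mul_le hd ((hP.rescaleFree hi hk).add_succ_mul_le hresc (hle _))

theorem floor_le_length (hP : RFDrescalePartition cf d T s0 xs a b P) (hc0 : 0 ≤ cf)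
    (hc1 : cf ≤ 1) (hd : 0 < d) (hs0 : ∀ x, 1 ≤ s0 x) (hle : ∀ k, RFDtotal cf d T s0 xs k ≤ T)
    (hi0 : 0 < i) (hi : i + 1 < P.length) :
    ⌊(1 - cf) * (((T : ℝ) - N) / d)⌋₊ ≤ P[i].2 - P[i].1 + 1 := by
  have hi' : i < P.length := i.lt_succ_self.trans hi
  obtain ⟨k, hk, hresc⟩ := hP.exists_rescaleAt_before hi0 hi'
  have hsnd : P[i].2 = k + 1 + (P[i].2 - P[i].1) + 1 := by
    have hfst_le := hP.1.fst_le_snd hi'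
    lia
  have hend : RFDrescaleAt cf d T s0 xs (k + 1 + (P[i].2 - P[i].1) + 1) :=
    hsnd ▸ hP.2.2 _ (List.getElem_mem hi') (hP.1.snd_lt hi)
  have hlt := (hP.rescaleFree hi' hk).mul_sub_lt hc0 hc1 hs0 hresc hend (hle k)
  refine Nat.lt_succ_iff.mp ((Nat.floor_lt' (Nat.succ_ne_zero _)).mpr ?_)
  rw [← mul_div_assoc, div_lt_iff₀ (Nat.cast_pos.mpr hd)]
  push_cast
  linarith

end RFDrescalePartition

/-- Lemma 2: segment lengths of the rescale partition `R` of `[1,n]`,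
with `L = (T - N)/d`:
(1) the first segment has length `m` with `1 ≤ m ≤ L + 1`;
(2) any segment other than the first and the last has length `m` with `⌊(1-c)L⌋ ≤ m ≤ L`;
(3) if `R` has more than one segment, the last segment has length `m` with `1 ≤ m ≤ L`. -/
theorem stmt1 (N d T : ℕ) (cf : ℝ) (hN : 1 < N)
    (s0 : Fin N → ℕ) (xs : ℕ → Fin N)
    (hd : 1 ≤ d) (hc0 : 0 ≤ cf) (hc1 : cf < 1)
    (hT : (d : ℝ) ≤ (1 - cf) * ((T : ℝ) - N))
    (hs0 : ∀ x, 1 ≤ s0 x) (hsum : ∑ x, s0 x ≤ T)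
    (n : ℕ) (hn : 1 ≤ n)
    (R : List (ℕ × ℕ)) (hR : RFDrescalePartition cf d T s0 xs 1 n R)
    (L : ℝ) (hL : L = ((T : ℝ) - N) / d) :
    (∀ p : ℕ × ℕ, R.head? = some p →
        1 ≤ p.2 - p.1 + 1 ∧ ((p.2 - p.1 + 1 : ℕ) : ℝ) ≤ L + 1) ∧
    (∀ (i : ℕ) (p : ℕ × ℕ), R[i]? = some p → 0 < i → i + 1 < R.length →
        ⌊(1 - cf) * L⌋₊ ≤ p.2 - p.1 + 1 ∧ ((p.2 - p.1 + 1 : ℕ) : ℝ) ≤ L) ∧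
    (1 < R.length → ∀ p : ℕ × ℕ, R.getLast? = some p →
        1 ≤ p.2 - p.1 + 1 ∧ ((p.2 - p.1 + 1 : ℕ) : ℝ) ≤ L) := by
  subst hL
  have hle : ∀ k, RFDtotal cf d T s0 xs k ≤ T := RFDtotal_le hc0 hc1.le hT hs0 hsum
  refine ⟨fun p hp => ⟨Nat.le_add_left _ _, ?_⟩, fun i p hp hi0 hi => ?_,
    fun hlen p hp => ⟨Nat.le_add_left _ _, ?_⟩⟩
  · rw [List.head?_eq_getElem?] at hp
    obtain ⟨h0, rfl⟩ := List.getElem?_eq_some_iff.mp hp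
    exact hR.length_zero_le le_rfl hd hs0 hle h0
  · obtain ⟨hi', rfl⟩ := List.getElem?_eq_some_iff.mp hp
    exact ⟨hR.floor_le_length hc0 hc1.le hd hs0 hle hi0 hi, hR.length_le hd hle hi0 hi'⟩
  · rw [List.getLast?_eq_getElem?] at hp
    obtain ⟨hlast, rfl⟩ := List.getElem?_eq_some_iff.mp hp
    exact hR.length_le hd hle (Nat.sub_pos_of_lt hlen) hlast
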